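/- arXiv:1605.09057 — 2 statements merged into one kernel-verified Lean document; each statement's English description precedes it below -/
import Mathlib

section
/- (Hilbert Basis Theorem for skew PBW extensions) Let A be a bijective skew PBW extension of a ring R with variables x_1,…,x_n. If R is left (respectively right) noetherian, then A is left (respectively right) noetherian. -/
/-- A *skew PBW extension* of a ring `R` inside a ring `A`, with variables `x 0, …, x (n-1)`. -/
structure SkewPBWExtension (R A : Type*) [Ring R] [Ring A] (n : ℕ) (x : Fin n → A) where
  ι : R →+* A
  ι_injective : Function.Injective ι
  basis : ∀ a : A, ∃! c : (Fin n → ℕ) →₀ R,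
    a = c.sum fun α r => ι r * (List.ofFn fun i => x i ^ α i).prod
  cond3 : ∀ (i : Fin n) (r : R), r ≠ 0 →
    ∃ c : R, c ≠ 0 ∧ ∃ r' : R, x i * ι r = ι c * x i + ι r'
  cond4 : ∀ i j : Fin n, ∃ c : R, c ≠ 0 ∧
    ∃ (r0 : R) (r' : Fin n → R), x j * x i = ι c * (x i * x j) + ι r0 + ∑ k, ι (r' k) * x k

/-- The skew PBW extension is *bijective*: each `σᵢ` is bijective (we ask for ring
automorphisms `σᵢ` with associated `σᵢ`-derivations `δᵢ` realizing `xᵢ r = σᵢ(r) xᵢ + δᵢ(r)`),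
and each constant `c_{i,j}` for `i < j` is invertible. -/
def SkewPBWExtension.IsBijective {R A : Type*} [Ring R] [Ring A] {n : ℕ} {x : Fin n → A}
    (E : SkewPBWExtension R A n x) : Prop :=
  (∀ i : Fin n, ∃ (σ : R ≃+* R) (δ : R → R),
      ∀ r : R, x i * E.ι r = E.ι (σ r) * x i + E.ι (δ r)) ∧
  (∀ i j : Fin n, i < j → ∃ c : Rˣ, ∃ (r0 : R) (r' : Fin n → R),
      x j * x i = E.ι c * (x i * x j) + E.ι r0 + ∑ k, E.ι (r' k) * x k)

/-!
Filter `A` by degree-lexicographic multidegree. Modulo lower terms the variables commute with each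
other and normalize the coefficients: `C xᵢ + lower = xᵢ C + lower`, where `C` is the image of `R`,
and `xⱼ xᵢ ∈ C xᵢ xⱼ + lower`. Hence, modulo lower terms, each graded piece is the span of one
monomial with coefficients in `C`, and the monomial may be taken from any ordering of its variables.
A left ideal `I` of `A` therefore has a left ideal of leading coefficients in `R` for each
multidegree; these grow with the multidegree in the divisibility order, and `I ≤ J` are equal as
soon as their leading coefficients agree. By Dickson's lemma, monotone families of left ideals of a
left Noetherian ring indexed by multidegrees satisfy the ascending chain condition, so the left
ideals of `A` do too.

The relations between `C` and the variables make sense as inclusions of additive subgroups of `A`.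
In this form they are stable under passing to opposite rings, which gives the right-hand statement.
-/

theorem wellFoundedGT_orderHom {α β : Type*} [Preorder α] [WellQuasiOrderedLE α]
    [Preorder β] [WellFoundedGT β] : WellFoundedGT (α →o β) := by
  refine ⟨wellFounded_iff_isEmpty_descending_chain.2 ⟨fun ⟨f, hf⟩ => ?_⟩⟩
  have hf_mono : StrictMono f := strictMono_nat_of_lt_succ hf
  have exists_growth (k : ℕ) : ∃ a, ¬ f (k + 1) a ≤ f k a := by
    by_contra! h
    exact (hf k).not_ge h
  choose a ha using exists_growth
  obtain ⟨g, hg⟩ := (wellQuasiOrdered_le (α := α)).exists_monotone_subseq a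
  refine not_strictMono_of_wellFoundedGT (fun k => f (g k) (a (g k)))
    (strictMono_nat_of_lt_succ fun k => ?_)
  calc f (g k) (a (g k))
    _ < f (g k + 1) (a (g k)) := lt_of_le_not_ge ((hf (g k)).le _) (ha (g k))
    _ ≤ f (g (k + 1)) (a (g k)) := hf_mono.monotone (g.strictMono k.lt_succ_self) _
    _ ≤ f (g (k + 1)) (a (g (k + 1))) := (f (g (k + 1))).mono (hg _ _ k.le_succ)

open Submodule

section Filtration

variable {S A Γ : Type*} [CommSemiring S] [Semiring A] [Algebra S A] {F F_lt : Γ → Submodule S A}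

theorem exists_mem_of_mem_filtrationLT [LinearOrder Γ] (F : Γ → Submodule S A)
    [IsFiltration F F_lt] {γ : Γ} {a : A} (ha : a ∈ F_lt γ) : a = 0 ∨ ∃ β < γ, a ∈ F β := by
  have hle : F_lt γ ≤ ⨆ β : Set.Iio γ, F β :=
    IsFiltration.is_sup _ _ fun β hβ => le_iSup (fun β : Set.Iio γ => F β) ⟨β, hβ⟩
  rcases isEmpty_or_nonempty (Set.Iio γ) with _ | _
  · exact Or.inl (by simpa only [iSup_of_empty, mem_bot] using hle ha)
  · have hmono : Monotone fun β : Set.Iio γ => F β := fun _ _ h => IsFiltration.mono h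
    obtain ⟨β, hβ⟩ := (mem_iSup_of_directed _ hmono.directed_le).1 (hle ha)
    exact Or.inr ⟨β, β.2, hβ⟩

variable [AddCommMonoid Γ] [PartialOrder Γ] [IsOrderedCancelAddMonoid Γ] [IsRingFiltration F F_lt]

theorem filtration_mul_filtrationLT_le (α β : Γ) : F α * F_lt β ≤ F_lt (α + β) := by
  refine mul_le.2 fun a ha => ?_
  exact IsFiltration.is_sup ((F_lt (α + β)).comap (LinearMap.mulLeft S a)) β fun γ hγ b hb =>
    IsFiltration.is_le (F := F) (add_lt_add_right hγ α) (SetLike.mul_mem_graded ha hb)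

theorem filtrationLT_mul_filtration_le (α β : Γ) : F_lt α * F β ≤ F_lt (α + β) := by
  refine mul_le.2 fun a ha b hb => ?_
  exact IsFiltration.is_sup ((F_lt (α + β)).comap (LinearMap.mulRight S b)) α (fun γ hγ c hc =>
    IsFiltration.is_le (F := F) (add_lt_add_left hγ β) (SetLike.mul_mem_graded hc hb)) ha

end Filtration

section Coefficients

variable {R A : Type*} [Ring R] [Ring A]

/-- The additive group of coefficients, the image of `ι`. All submodules of `A` are taken over `ℤ`,
since `ι` need not be central. -/
abbrev coeffs (ι : R →+* A) : Submodule ℤ A :=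
  Subalgebra.toSubmodule ι.toIntAlgHom.range

variable (ι : R →+* A)

theorem coeff_mem_coeffs (r : R) : ι r ∈ coeffs ι :=
  ⟨r, rfl⟩

theorem coeffs_mul_coeffs : coeffs ι * coeffs ι = coeffs ι :=
  Subalgebra.isIdempotentElem_toSubmodule _

theorem one_le_coeffs : 1 ≤ coeffs ι :=
  one_le.2 (one_mem ι.toIntAlgHom.range)

theorem le_coeffs_mul (M : Submodule ℤ A) : M ≤ coeffs ι * M :=
  le_mul_of_one_le_left' (one_le_coeffs ι)

theorem le_mul_coeffs (M : Submodule ℤ A) : M ≤ M * coeffs ι :=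
  le_mul_of_one_le_right' (one_le_coeffs ι)

end Coefficients

section LeadingCoefficients

variable {R A Γ : Type*} [Ring R] [Ring A] [AddCommMonoid Γ] [LinearOrder Γ]
  {ι : R →+* A} {m : Γ → A} {F F_lt : Γ → Submodule ℤ A}

/-- A ring filtration in which `F γ` is spanned, up to lower terms, by one monomial `m γ` with
coefficients in the image of `ι`, and monomials multiply up to lower terms. The multiplicativity is
stated as right divisibility of `F (α + β)` by `m β`, so that scalars need not be tracked. -/
structure IsMonomialFiltration (ι : R →+* A) (m : Γ → A) (F F_lt : Γ → Submodule ℤ A) :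
    Prop extends IsRingFiltration F F_lt where
  exhaustive : ∀ a, ∃ γ, a ∈ F γ
  coeffs_le : coeffs ι ≤ F 0
  monomial_mem : ∀ γ, m γ ∈ F γ
  le_monomial_mul_coeffs : ∀ γ, F γ ≤ (ℤ ∙ m γ) * coeffs ι ⊔ F_lt γ
  le_mul_monomial : ∀ α β, F (α + β) ≤ F α * (ℤ ∙ m β) ⊔ F_lt (α + β)

namespace IsMonomialFiltration

variable (h : IsMonomialFiltration ι m F F_lt)
include h

theorem coeff_mem (r : R) : ι r ∈ F 0 :=
  h.coeffs_le (coeff_mem_coeffs ι r)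

variable [IsOrderedCancelAddMonoid Γ]

theorem mul_coeff_mem {I : Ideal A} {α β : Γ} {b : A} {r : R} (hb : b ∈ F (α + β))
    (hr : m β * ι r ∈ I.restrictScalars ℤ ⊔ F_lt β) :
    b * ι r ∈ I.restrictScalars ℤ ⊔ F_lt (α + β) := by
  have := h.toIsRingFiltration
  obtain ⟨f, hf, u, hu, hfu⟩ := mem_sup.1 hr
  obtain ⟨_, hc, v, hv, rfl⟩ := mem_sup.1 (h.le_mul_monomial α β hb)
  obtain ⟨a, ha, rfl⟩ := mem_mul_span_singleton.1 hc
  have hau : a * u ∈ F_lt (α + β) := filtration_mul_filtrationLT_le α β (mul_mem_mul ha hu)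
  have hvr : v * ι r ∈ F_lt (α + β) := by
    simpa using filtrationLT_mul_filtration_le (α + β) 0 (mul_mem_mul hv (h.coeff_mem r))
  have hexpand : (a * m β + v) * ι r = a * f + (a * u + v * ι r) := by
    rw [add_mul, mul_assoc, ← hfu, mul_add, add_assoc]
  rw [hexpand]
  exact add_mem_sup (I.mul_mem_left a hf) (add_mem hau hvr)

/-- The left ideal of leading coefficients of the elements of `I` of multidegree `γ`. Coefficients
are written to the right of monomials, where left multiplication by `A` does not disturb them. -/
def leadingCoeffIdeal (I : Ideal A) (γ : Γ) : Ideal R where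
  carrier := {r | m γ * ι r ∈ I.restrictScalars ℤ ⊔ F_lt γ}
  zero_mem' := by simp
  add_mem' {r s} hr hs := by
    simpa only [Set.mem_ofPred_eq, map_add, mul_add] using add_mem hr hs
  smul_mem' s r hr := by
    have := h.toIsRingFiltration
    have hs : m γ * ι s ∈ F (0 + γ) := by
      simpa only [add_comm] using SetLike.mul_mem_graded (h.monomial_mem γ) (h.coeff_mem s)
    simpa only [Set.mem_ofPred_eq, smul_eq_mul, map_mul, mul_assoc, zero_add]
      using h.mul_coeff_mem hs hr

theorem leadingCoeffIdeal_mono_left {I J : Ideal A} (hIJ : I ≤ J) (γ : Γ) :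
    h.leadingCoeffIdeal I γ ≤ h.leadingCoeffIdeal J γ := fun _ hr =>
  sup_le_sup_right (fun _ ha => hIJ ha) (F_lt γ) hr

theorem leadingCoeffIdeal_le_add (I : Ideal A) (α β : Γ) :
    h.leadingCoeffIdeal I β ≤ h.leadingCoeffIdeal I (α + β) := fun _ hr =>
  h.mul_coeff_mem (h.monomial_mem (α + β)) hr

theorem le_of_leadingCoeffIdeal_le [WellFoundedLT Γ] {I J : Ideal A} (hIJ : I ≤ J)
    (hlead : ∀ γ, h.leadingCoeffIdeal J γ ≤ h.leadingCoeffIdeal I γ) : J ≤ I := by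
  have := h.toIsRingFiltration
  have mem_of_mem_filtration (γ : Γ) : ∀ a ∈ J, a ∈ F γ → a ∈ I := by
    induction γ using WellFoundedLT.induction with
    | _ γ ih =>
      have mem_of_mem_filtrationLT : ∀ a ∈ J, a ∈ F_lt γ → a ∈ I := by
        intro a haJ ha
        rcases exists_mem_of_mem_filtrationLT F ha with rfl | ⟨β, hβ, haβ⟩
        · exact I.zero_mem
        · exact ih β hβ a haJ haβ
      intro a haJ ha
      obtain ⟨_, hc, u, hu, rfl⟩ := mem_sup.1 (h.le_monomial_mul_coeffs γ ha)
      obtain ⟨_, ⟨r, rfl⟩, rfl⟩ := mem_span_singleton_mul.1 hc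
      have hr : r ∈ h.leadingCoeffIdeal J γ :=
        mem_sup.2 ⟨_, haJ, -u, neg_mem hu, by simp⟩
      obtain ⟨b, hb, v, hv, hbv⟩ := mem_sup.1 (hlead γ hr)
      have hlower : v + u ∈ I := by
        refine mem_of_mem_filtrationLT _ ?_ (add_mem hv hu)
        have := J.sub_mem haJ (hIJ hb)
        simpa [← hbv, add_assoc] using this
      have := I.add_mem hb hlower
      rwa [← add_assoc, hbv] at this
  intro a ha
  obtain ⟨γ, hγ⟩ := h.exhaustive a
  exact mem_of_mem_filtration γ a ha hγ

end IsMonomialFiltration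
end LeadingCoefficients

theorem IsMonomialFiltration.isNoetherianRing {R A X : Type*} [Ring R] [Ring A] [Finite X]
    {mo : MonomialOrder X} {ι : R →+* A} {m : mo.syn → A} {F F_lt : mo.syn → Submodule ℤ A}
    (h : IsMonomialFiltration ι m F F_lt) [IsNoetherianRing R] :
    IsNoetherianRing A := by
  have lead_mono (I : Ideal A) : Monotone fun α => h.leadingCoeffIdeal I (mo.toSyn α) := by
    intro α β hαβ
    obtain ⟨γ, rfl⟩ := exists_add_of_le hαβ
    simpa [add_comm] using h.leadingCoeffIdeal_le_add I (mo.toSyn γ) (mo.toSyn α)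
  let lead (I : Ideal A) : (X →₀ ℕ) →o Ideal R := ⟨_, lead_mono I⟩
  have lead_strictMono : StrictMono lead := fun I J hIJ =>
    lt_of_le_not_ge (fun α => h.leadingCoeffIdeal_mono_left hIJ.le _) fun hle =>
      hIJ.not_ge <| h.le_of_leadingCoeffIdeal_le hIJ.le <| mo.toSyn.surjective.forall.2 hle
  have := wellFoundedGT_orderHom (α := X →₀ ℕ) (β := Ideal R)
  exact isNoetherian_iff'.2 lead_strictMono.wellFoundedGT

section Words

variable {X : Type*} [LinearOrder X] [Finite X]

variable (X) in
/-- Multidegrees of monomials in the variables `X`, ordered degree-lexicographically. -/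
abbrev Exponent : Type _ := (MonomialOrder.degLex (σ := X)).syn

/-- The multidegree of a word in the variables. -/
noncomputable def exponent (w : List X) : Exponent X :=
  MonomialOrder.degLex.toSyn (Multiset.toFinsupp (w : Multiset X))

theorem exponent_nil : exponent ([] : List X) = 0 := by
  simp [exponent]

theorem exponent_append (v w : List X) : exponent (v ++ w) = exponent v + exponent w := by
  simp only [exponent, ← Multiset.coe_add, map_add]

theorem exponent_cons (i : X) (w : List X) : exponent (i :: w) = exponent [i] + exponent w :=
  exponent_append [i] w

theorem exponent_eq_exponent_iff_perm {v w : List X} : exponent v = exponent w ↔ v.Perm w := by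
  simp [exponent]

theorem exponent_surjective : Function.Surjective (exponent (X := X)) := by
  intro γ
  refine ⟨(Finsupp.toMultiset (MonomialOrder.degLex.toSyn.symm γ)).toList, ?_⟩
  simp [exponent]

theorem exponent_lt_exponent_of_length_lt {v w : List X} (h : v.length < w.length) :
    exponent v < exponent w := by
  have degree_toFinsupp (u : List X) :
      (Multiset.toFinsupp (u : Multiset X)).degree = u.length := by
    simp [Finsupp.degree_apply]
  refine MonomialOrder.degLex_lt_iff.2 (Finsupp.DegLex.lt_iff.2 (Or.inl ?_))
  simpa [degree_toFinsupp] using h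

theorem exponent_lt_exponent_cons (i : X) (w : List X) : exponent w < exponent (i :: w) :=
  exponent_lt_exponent_of_length_lt (Nat.lt_succ_self _)

end Words

section AlmostNormalizing

variable {R A X : Type*} [Ring R] [Ring A]

/-- The additive group of polynomials of degree at most one in the `x i`. Coefficients are allowed
on both sides so that the notion is symmetric under passing to opposite rings. -/
def linearSpan (ι : R →+* A) (x : X → A) : Submodule ℤ A :=
  (⨆ k, coeffs ι * (ℤ ∙ x k) * coeffs ι) ⊔ coeffs ι

theorem coeffs_mul_linearSpan_le (ι : R →+* A) (x : X → A) :
    coeffs ι * linearSpan ι x ≤ linearSpan ι x := by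
  simp only [linearSpan, Submodule.mul_sup, mul_iSup, ← mul_assoc, coeffs_mul_coeffs, le_refl]

theorem const_add_sum_mem_linearSpan [Fintype X] (ι : R →+* A) (x : X → A) (r₀ : R) (r : X → R) :
    ι r₀ + ∑ k, ι (r k) * x k ∈ linearSpan ι x := by
  refine add_mem (mem_sup_right (coeff_mem_coeffs ι r₀)) (sum_mem fun k _ => mem_sup_left ?_)
  exact mem_iSup_of_mem k <| le_mul_coeffs ι _ <|
    mul_mem_mul (coeff_mem_coeffs ι _) (mem_span_singleton_self _)

/-- `A` is generated over the image of `ι` by elements `x i` that normalize it up to constants, and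
that commute with each other up to coefficients and linear terms. This weakens the almost
normalizing extensions of McConnell and Robson, in which `xᵢ xⱼ - xⱼ xᵢ` is linear. -/
structure IsAlmostNormalizing (ι : R →+* A) (x : X → A) : Prop where
  var_mul_coeffs : ∀ i, (ℤ ∙ x i) * coeffs ι ≤ coeffs ι * (ℤ ∙ x i) ⊔ coeffs ι
  coeffs_mul_var : ∀ i, coeffs ι * (ℤ ∙ x i) ≤ (ℤ ∙ x i) * coeffs ι ⊔ coeffs ι
  var_mul_var : ∀ i j, (ℤ ∙ x j) * (ℤ ∙ x i) ≤
    coeffs ι * ((ℤ ∙ x i) * (ℤ ∙ x j)) * coeffs ι ⊔ linearSpan ι x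
  closure_eq_top : Subring.closure (Set.range ι ∪ Set.range x) = ⊤

end AlmostNormalizing

section WordFiltration

variable {R A X : Type*} [Ring R] [Ring A]

/-- The line spanned by the word `w` evaluated at `x`, as a product of lines, so that words can be
computed with inside the semiring of submodules. -/
def wordLine (x : X → A) (w : List X) : Submodule ℤ A :=
  (w.map fun i => ℤ ∙ x i).prod

theorem wordLine_nil (x : X → A) : wordLine x [] = 1 := rfl

theorem wordLine_cons (x : X → A) (i : X) (w : List X) :
    wordLine x (i :: w) = (ℤ ∙ x i) * wordLine x w :=
  List.prod_cons

theorem wordLine_append (x : X → A) (v w : List X) :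
    wordLine x (v ++ w) = wordLine x v * wordLine x w := by
  simp only [wordLine, List.map_append, List.prod_append]

theorem wordLine_singleton (x : X → A) (i : X) : wordLine x [i] = ℤ ∙ x i :=
  List.prod_singleton

theorem wordLine_pair (x : X → A) (i j : X) : wordLine x [i, j] = (ℤ ∙ x i) * (ℤ ∙ x j) := by
  rw [wordLine_cons, wordLine_singleton]

theorem wordLine_eq_span (x : X → A) (w : List X) : wordLine x w = ℤ ∙ (w.map x).prod := by
  simpa [wordLine, Function.comp_def] using
    (map_list_prod (Submodule.spanSingleton ℤ) (w.map x)).symm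

namespace IsAlmostNormalizing

variable {ι : R →+* A} {x : X → A} (h : IsAlmostNormalizing ι x)
include h

theorem var_mul_coeffs_mul_wordLine_le (i : X) (w : List X) :
    (ℤ ∙ x i) * (coeffs ι * wordLine x w) ≤
      coeffs ι * wordLine x (i :: w) ⊔ coeffs ι * wordLine x w := by
  rw [← mul_assoc, wordLine_cons, ← mul_assoc, ← Submodule.sup_mul]
  exact mul_le_mul_left (h.var_mul_coeffs i) _

theorem coeffs_mul_wordLine_cons_le (i : X) (w : List X) :
    coeffs ι * wordLine x (i :: w) ≤
      (ℤ ∙ x i) * (coeffs ι * wordLine x w) ⊔ coeffs ι * wordLine x w := by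
  rw [← mul_assoc, wordLine_cons, ← mul_assoc, ← Submodule.sup_mul]
  exact mul_le_mul_left (h.coeffs_mul_var i) _

end IsAlmostNormalizing

variable [LinearOrder X] [Finite X]

/-- The left polynomials supported on words with multidegree in `s`. -/
noncomputable def wordSpan (ι : R →+* A) (x : X → A) (s : Set (Exponent X)) : Submodule ℤ A :=
  ⨆ (w : List X) (_ : exponent w ∈ s), coeffs ι * wordLine x w

variable {ι : R →+* A} {x : X → A} {s t : Set (Exponent X)} {w : List X}

theorem coeffs_mul_wordLine_le_wordSpan (hw : exponent w ∈ s) :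
    coeffs ι * wordLine x w ≤ wordSpan ι x s :=
  le_iSup₂_of_le w hw le_rfl

theorem wordLine_le_wordSpan (hw : exponent w ∈ s) : wordLine x w ≤ wordSpan ι x s :=
  (le_coeffs_mul ι _).trans (coeffs_mul_wordLine_le_wordSpan hw)

theorem wordSpan_mono (hst : s ⊆ t) : wordSpan ι x s ≤ wordSpan ι x t :=
  iSup₂_le fun _ hw => coeffs_mul_wordLine_le_wordSpan (hst hw)

theorem coeffs_mul_wordSpan_le : coeffs ι * wordSpan ι x s ≤ wordSpan ι x s := by
  simp only [wordSpan, mul_iSup, ← mul_assoc, coeffs_mul_coeffs, le_refl]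

theorem wordSpan_mul_wordLine_le (h : ∀ γ ∈ s, γ + exponent w ∈ t) :
    wordSpan ι x s * wordLine x w ≤ wordSpan ι x t := by
  simp only [wordSpan, iSup_mul, mul_assoc, ← wordLine_append]
  exact iSup₂_le fun v hv =>
    coeffs_mul_wordLine_le_wordSpan ((exponent_append v w).symm ▸ h _ hv)

/-- The filtration of `A` by multidegree. -/
noncomputable abbrev wordFiltration (ι : R →+* A) (x : X → A) (γ : Exponent X) : Submodule ℤ A :=
  wordSpan ι x (Set.Iic γ)

/-- The terms of multidegree strictly below `γ`, the lower terms at `γ`. -/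
noncomputable abbrev wordFiltrationLT (ι : R →+* A) (x : X → A) (γ : Exponent X) :
    Submodule ℤ A :=
  wordSpan ι x (Set.Iio γ)

theorem isFiltration_wordFiltration :
    IsFiltration (wordFiltration ι x) (wordFiltrationLT ι x) where
  mono _ _ h := wordSpan_mono (Set.Iic_subset_Iic.2 h)
  is_le h := wordSpan_mono (Set.Iic_subset_Iio.2 h)
  is_sup _ _ h := iSup₂_le fun v hv =>
    (coeffs_mul_wordLine_le_wordSpan (Set.mem_Iic.2 le_rfl)).trans (h (exponent v) hv)

theorem coeffs_mul_wordLine_le_wordFiltrationLT {γ : Exponent X} (hw : exponent w < γ) :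
    coeffs ι * wordLine x w ≤ wordFiltrationLT ι x γ :=
  coeffs_mul_wordLine_le_wordSpan (Set.mem_Iio.2 hw)

theorem wordFiltrationLT_le_wordFiltration (γ : Exponent X) :
    wordFiltrationLT ι x γ ≤ wordFiltration ι x γ :=
  wordSpan_mono Set.Iio_subset_Iic_self

theorem coeffs_le_wordFiltration_zero : coeffs ι ≤ wordFiltration ι x 0 := by
  have hnil : exponent ([] : List X) ∈ Set.Iic 0 := exponent_nil.le
  simpa only [wordLine_nil, mul_one] using
    coeffs_mul_wordLine_le_wordSpan (ι := ι) (x := x) hnil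

theorem wordFiltrationLT_mul_wordLine_le (v w : List X) :
    wordFiltrationLT ι x (exponent v) * wordLine x w ≤
      wordFiltrationLT ι x (exponent (v ++ w)) := by
  rw [exponent_append]
  exact wordSpan_mul_wordLine_le fun γ hγ => add_lt_add_left (Set.mem_Iio.1 hγ) _

namespace IsAlmostNormalizing

variable (h : IsAlmostNormalizing ι x)
include h

theorem var_mul_wordFiltrationLT_le (i : X) (w : List X) :
    (ℤ ∙ x i) * wordFiltrationLT ι x (exponent w) ≤ wordFiltrationLT ι x (exponent (i :: w)) := by
  simp only [wordFiltrationLT, wordSpan, mul_iSup]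
  refine iSup₂_le fun v hv => (h.var_mul_coeffs_mul_wordLine_le i v).trans ?_
  have hiv : exponent (i :: v) < exponent (i :: w) := by
    rw [exponent_cons i v, exponent_cons i w]
    exact add_lt_add_right (Set.mem_Iio.1 hv) _
  exact sup_le (coeffs_mul_wordLine_le_wordFiltrationLT hiv)
    (coeffs_mul_wordLine_le_wordFiltrationLT ((exponent_lt_exponent_cons i v).trans hiv))

theorem var_mul_coeffs_mul_wordLine_le_sup_wordFiltrationLT (i : X) (w : List X) :
    (ℤ ∙ x i) * (coeffs ι * wordLine x w) ≤
      coeffs ι * wordLine x (i :: w) ⊔ wordFiltrationLT ι x (exponent (i :: w)) :=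
  (h.var_mul_coeffs_mul_wordLine_le i w).trans <|
    sup_le_sup_left (coeffs_mul_wordLine_le_wordFiltrationLT (exponent_lt_exponent_cons i w)) _

theorem wordLine_mul_coeffs_le (w : List X) :
    wordLine x w * coeffs ι ≤ coeffs ι * wordLine x w ⊔ wordFiltrationLT ι x (exponent w) := by
  induction w with
  | nil => simp [wordLine_nil]
  | cons i w ih =>
    calc wordLine x (i :: w) * coeffs ι
      _ = (ℤ ∙ x i) * (wordLine x w * coeffs ι) := by rw [wordLine_cons, mul_assoc]
      _ ≤ (ℤ ∙ x i) * (coeffs ι * wordLine x w ⊔ wordFiltrationLT ι x (exponent w)) := by gcongr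
      _ ≤ coeffs ι * wordLine x (i :: w) ⊔ wordFiltrationLT ι x (exponent (i :: w)) := by
        rw [Submodule.mul_sup]
        exact sup_le (h.var_mul_coeffs_mul_wordLine_le_sup_wordFiltrationLT i w)
          (le_sup_of_le_right (h.var_mul_wordFiltrationLT_le i w))

theorem coeffs_mul_wordLine_le (w : List X) :
    coeffs ι * wordLine x w ≤ wordLine x w * coeffs ι ⊔ wordFiltrationLT ι x (exponent w) := by
  induction w with
  | nil => simp [wordLine_nil]
  | cons i w ih =>
    calc coeffs ι * wordLine x (i :: w)
      _ ≤ (ℤ ∙ x i) * (coeffs ι * wordLine x w) ⊔ coeffs ι * wordLine x w :=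
        h.coeffs_mul_wordLine_cons_le i w
      _ ≤ (ℤ ∙ x i) * (wordLine x w * coeffs ι ⊔ wordFiltrationLT ι x (exponent w)) ⊔
            wordFiltrationLT ι x (exponent (i :: w)) :=
        sup_le_sup (mul_le_mul_right ih _)
          (coeffs_mul_wordLine_le_wordFiltrationLT (exponent_lt_exponent_cons i w))
      _ ≤ wordLine x (i :: w) * coeffs ι ⊔ wordFiltrationLT ι x (exponent (i :: w)) := by
        rw [Submodule.mul_sup, ← mul_assoc, ← wordLine_cons]
        exact sup_le (sup_le_sup_left (h.var_mul_wordFiltrationLT_le i w) _) le_sup_right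

theorem coeffs_mul_wordLine_mul_coeffs_le (w : List X) :
    coeffs ι * wordLine x w * coeffs ι ≤
      coeffs ι * wordLine x w ⊔ wordFiltrationLT ι x (exponent w) :=
  calc coeffs ι * wordLine x w * coeffs ι
    _ ≤ coeffs ι * (coeffs ι * wordLine x w ⊔ wordFiltrationLT ι x (exponent w)) := by
      rw [mul_assoc]
      exact mul_le_mul_right (h.wordLine_mul_coeffs_le w) _
    _ ≤ coeffs ι * wordLine x w ⊔ wordFiltrationLT ι x (exponent w) := by
      rw [Submodule.mul_sup, ← mul_assoc, coeffs_mul_coeffs]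
      exact sup_le_sup_left coeffs_mul_wordSpan_le _

theorem linearSpan_le_wordFiltrationLT {w : List X} (hw : 1 < w.length) :
    linearSpan ι x ≤ wordFiltrationLT ι x (exponent w) := by
  refine sup_le (iSup_le fun k => ?_) ?_
  · have hk : exponent [k] < exponent w := exponent_lt_exponent_of_length_lt hw
    rw [← wordLine_singleton]
    exact (h.coeffs_mul_wordLine_mul_coeffs_le [k]).trans <|
      sup_le (coeffs_mul_wordLine_le_wordFiltrationLT hk) (wordSpan_mono (Set.Iio_subset_Iio hk.le))
  · have hnil : exponent [] < exponent w :=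
      exponent_lt_exponent_of_length_lt (Nat.zero_lt_of_lt hw)
    simpa only [wordLine_nil, mul_one] using
      coeffs_mul_wordLine_le_wordFiltrationLT (ι := ι) (x := x) hnil

theorem wordLine_pair_le (i j : X) :
    wordLine x [j, i] ≤ coeffs ι * wordLine x [i, j] ⊔ wordFiltrationLT ι x (exponent [j, i]) := by
  have hquadratic : coeffs ι * wordLine x [i, j] * coeffs ι ≤
      coeffs ι * wordLine x [i, j] ⊔ wordFiltrationLT ι x (exponent [j, i]) := by
    rw [exponent_eq_exponent_iff_perm.2 (List.Perm.swap i j [])]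
    exact h.coeffs_mul_wordLine_mul_coeffs_le [i, j]
  rw [wordLine_pair x i j] at hquadratic ⊢
  rw [wordLine_pair x j i]
  exact (h.var_mul_var i j).trans <|
    sup_le hquadratic (le_sup_of_le_right (h.linearSpan_le_wordFiltrationLT (by simp)))

theorem wordLine_le_of_perm {v w : List X} (hvw : v.Perm w) :
    wordLine x v ≤ coeffs ι * wordLine x w ⊔ wordFiltrationLT ι x (exponent v) := by
  induction hvw with
  | nil => exact (le_coeffs_mul ι _).trans le_sup_left
  | @cons i v w hvw ih =>
    calc wordLine x (i :: v)
      _ ≤ (ℤ ∙ x i) * (coeffs ι * wordLine x w ⊔ wordFiltrationLT ι x (exponent v)) :=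
        mul_le_mul_right ih _
      _ ≤ coeffs ι * wordLine x (i :: w) ⊔ wordFiltrationLT ι x (exponent (i :: v)) := by
        have hi := h.var_mul_coeffs_mul_wordLine_le_sup_wordFiltrationLT i w
        rw [← exponent_eq_exponent_iff_perm.2 (hvw.cons i)] at hi
        rw [Submodule.mul_sup]
        exact sup_le hi (le_sup_of_le_right (h.var_mul_wordFiltrationLT_le i v))
  | swap i j u =>
    calc wordLine x (j :: i :: u)
      _ = wordLine x [j, i] * wordLine x u := wordLine_append x [j, i] u
      _ ≤ (coeffs ι * wordLine x [i, j] ⊔ wordFiltrationLT ι x (exponent [j, i])) * wordLine x u :=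
        mul_le_mul_left (h.wordLine_pair_le i j) _
      _ ≤ coeffs ι * wordLine x (i :: j :: u) ⊔ wordFiltrationLT ι x (exponent (j :: i :: u)) := by
        rw [Submodule.sup_mul, mul_assoc, ← wordLine_append]
        exact sup_le_sup_left (wordFiltrationLT_mul_wordLine_le [j, i] u) _
  | @trans u v w huv _ ihuv ihvw =>
    calc wordLine x u
      _ ≤ coeffs ι * wordLine x v ⊔ wordFiltrationLT ι x (exponent u) := ihuv
      _ ≤ coeffs ι * (coeffs ι * wordLine x w ⊔ wordFiltrationLT ι x (exponent v)) ⊔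
            wordFiltrationLT ι x (exponent u) := sup_le_sup_right (mul_le_mul_right ihvw _) _
      _ ≤ coeffs ι * wordLine x w ⊔ wordFiltrationLT ι x (exponent u) := by
        rw [Submodule.mul_sup, ← mul_assoc, coeffs_mul_coeffs,
          exponent_eq_exponent_iff_perm.2 huv, sup_assoc]
        exact sup_le_sup_left (sup_le coeffs_mul_wordSpan_le le_rfl) _

theorem wordFiltration_mul_le (α β : Exponent X) :
    wordFiltration ι x α * wordFiltration ι x β ≤ wordFiltration ι x (α + β) := by
  simp only [wordFiltration, wordSpan, iSup_mul, mul_iSup]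
  refine iSup₂_le fun v hv => iSup₂_le fun u hu => ?_
  have huv : exponent (u ++ v) ≤ α + β := exponent_append u v ▸ add_le_add hu hv
  calc coeffs ι * wordLine x u * (coeffs ι * wordLine x v)
    _ = coeffs ι * wordLine x u * coeffs ι * wordLine x v := (mul_assoc _ _ _).symm
    _ ≤ (coeffs ι * wordLine x u ⊔ wordFiltrationLT ι x (exponent u)) * wordLine x v :=
      mul_le_mul_left (h.coeffs_mul_wordLine_mul_coeffs_le u) _
    _ ≤ wordFiltration ι x (exponent (u ++ v)) := by
      rw [Submodule.sup_mul, mul_assoc, ← wordLine_append]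
      exact sup_le (coeffs_mul_wordLine_le_wordSpan (Set.mem_Iic.2 le_rfl))
        ((wordFiltrationLT_mul_wordLine_le u v).trans (wordFiltrationLT_le_wordFiltration _))
    _ ≤ wordFiltration ι x (α + β) := wordSpan_mono (Set.Iic_subset_Iic.2 huv)

theorem isRingFiltration_wordFiltration :
    IsRingFiltration (wordFiltration ι x) (wordFiltrationLT ι x) where
  toIsFiltration := isFiltration_wordFiltration
  one_mem := coeffs_le_wordFiltration_zero (one_le.1 (one_le_coeffs ι))
  mul_mem α β _ _ ha hb := h.wordFiltration_mul_le α β (mul_mem_mul ha hb)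

theorem wordFiltration_exponent_le (w : List X) :
    wordFiltration ι x (exponent w) ≤
      coeffs ι * wordLine x w ⊔ wordFiltrationLT ι x (exponent w) := by
  refine iSup₂_le fun v hv => ?_
  rcases (Set.mem_Iic.1 hv).lt_or_eq with hlt | heq
  · exact le_sup_of_le_right (coeffs_mul_wordLine_le_wordFiltrationLT hlt)
  · calc coeffs ι * wordLine x v
      _ ≤ coeffs ι * (coeffs ι * wordLine x w ⊔ wordFiltrationLT ι x (exponent v)) :=
        mul_le_mul_right (h.wordLine_le_of_perm (exponent_eq_exponent_iff_perm.1 heq)) _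
      _ ≤ coeffs ι * wordLine x w ⊔ wordFiltrationLT ι x (exponent w) := by
        rw [Submodule.mul_sup, ← mul_assoc, coeffs_mul_coeffs, heq]
        exact sup_le_sup_left coeffs_mul_wordSpan_le _

theorem exists_mem_wordFiltration (a : A) : ∃ γ, a ∈ wordFiltration ι x γ := by
  have := h.isRingFiltration_wordFiltration
  have hmono : Monotone (wordFiltration ι x) := IsFiltration.mono
  have ha : a ∈ Subring.closure (Set.range ι ∪ Set.range x) := h.closure_eq_top ▸ Subring.mem_top a
  induction ha using Subring.closure_induction with
  | mem a ha =>
    rcases ha with ⟨r, rfl⟩ | ⟨i, rfl⟩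
    · exact ⟨0, coeffs_le_wordFiltration_zero (coeff_mem_coeffs ι r)⟩
    · refine ⟨exponent [i], wordLine_le_wordSpan (Set.mem_Iic.2 le_rfl) ?_⟩
      exact wordLine_singleton x i ▸ mem_span_singleton_self _
  | zero => exact ⟨0, zero_mem _⟩
  | one => exact ⟨0, SetLike.GradedOne.one_mem⟩
  | add a b _ _ iha ihb =>
    obtain ⟨α, ha⟩ := iha
    obtain ⟨β, hb⟩ := ihb
    exact ⟨max α β, add_mem (hmono (le_max_left α β) ha) (hmono (le_max_right α β) hb)⟩
  | neg a _ iha => exact iha.imp fun _ => neg_mem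
  | mul a b _ _ iha ihb =>
    obtain ⟨α, ha⟩ := iha
    obtain ⟨β, hb⟩ := ihb
    exact ⟨α + β, SetLike.mul_mem_graded ha hb⟩

end IsAlmostNormalizing

/-- The monomial of multidegree `γ`, with its variables multiplied in an arbitrary order. -/
noncomputable def standardMonomial (x : X → A) (γ : Exponent X) : A :=
  ((Function.surjInv exponent_surjective γ).map x).prod

theorem exists_span_standardMonomial_eq (x : X → A) (γ : Exponent X) :
    ∃ w, exponent w = γ ∧ (ℤ ∙ standardMonomial x γ) = wordLine x w :=
  ⟨_, Function.surjInv_eq exponent_surjective γ, (wordLine_eq_span x _).symm⟩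

theorem IsAlmostNormalizing.isMonomialFiltration (h : IsAlmostNormalizing ι x) :
    IsMonomialFiltration ι (standardMonomial x) (wordFiltration ι x) (wordFiltrationLT ι x) := by
  refine ⟨h.isRingFiltration_wordFiltration, h.exists_mem_wordFiltration,
    coeffs_le_wordFiltration_zero, ?_, ?_, ?_⟩
  · intro γ
    obtain ⟨w, rfl, hw⟩ := exists_span_standardMonomial_eq x γ
    exact wordLine_le_wordSpan (Set.mem_Iic.2 le_rfl) (hw ▸ mem_span_singleton_self _)
  · intro γ
    obtain ⟨w, rfl, hw⟩ := exists_span_standardMonomial_eq x γ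
    rw [hw]
    exact (h.wordFiltration_exponent_le w).trans (sup_le (h.coeffs_mul_wordLine_le w) le_sup_right)
  · intro α β
    obtain ⟨v, rfl, -⟩ := exists_span_standardMonomial_eq x α
    obtain ⟨w, rfl, hw⟩ := exists_span_standardMonomial_eq x β
    rw [hw, ← exponent_append]
    refine (h.wordFiltration_exponent_le (v ++ w)).trans (sup_le_sup_right ?_ _)
    rw [wordLine_append, ← mul_assoc]
    exact mul_le_mul_left (coeffs_mul_wordLine_le_wordSpan (Set.mem_Iic.2 le_rfl)) _

end WordFiltration

theorem IsAlmostNormalizing.isNoetherianRing {R A X : Type*} [Ring R] [Ring A] [Finite X]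
    {ι : R →+* A} {x : X → A} (h : IsAlmostNormalizing ι x) [IsNoetherianRing R] :
    IsNoetherianRing A := by
  have : LinearOrder X := IsWellOrder.linearOrder WellOrderingRel
  exact h.isMonomialFiltration.isNoetherianRing

section Opposite

open MulOpposite

variable {R A X : Type*} [Ring R] [Ring A]

theorem coeffs_op (ι : R →+* A) :
    coeffs (RingHom.op ι) = (coeffs ι).map (opLinearEquiv ℤ : A ≃ₗ[ℤ] Aᵐᵒᵖ).toLinearMap := by
  ext a
  constructor
  · rintro ⟨r, rfl⟩
    exact mem_map_of_mem (coeff_mem_coeffs ι r.unop)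
  · rintro ⟨_, ⟨r, rfl⟩, rfl⟩
    exact coeff_mem_coeffs (RingHom.op ι) (op r)

theorem span_singleton_op (a : A) :
    (ℤ ∙ op a) = (ℤ ∙ a).map (opLinearEquiv ℤ : A ≃ₗ[ℤ] Aᵐᵒᵖ).toLinearMap := by
  simp [Submodule.map_span]

theorem linearSpan_op (ι : R →+* A) (x : X → A) :
    linearSpan (RingHom.op ι) (fun i => op (x i)) =
      (linearSpan ι x).map (opLinearEquiv ℤ : A ≃ₗ[ℤ] Aᵐᵒᵖ).toLinearMap := by
  simp only [linearSpan, coeffs_op, span_singleton_op, ← Submodule.map_op_mul,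
    ← Submodule.map_sup, ← Submodule.map_iSup, mul_assoc]

theorem IsAlmostNormalizing.op {ι : R →+* A} {x : X → A} (h : IsAlmostNormalizing ι x) :
    IsAlmostNormalizing (RingHom.op ι) fun i => MulOpposite.op (x i) where
  var_mul_coeffs i := by
    simp only [coeffs_op, span_singleton_op, ← Submodule.map_op_mul, ← Submodule.map_sup]
    exact Submodule.map_mono (h.coeffs_mul_var i)
  coeffs_mul_var i := by
    simp only [coeffs_op, span_singleton_op, ← Submodule.map_op_mul, ← Submodule.map_sup]
    exact Submodule.map_mono (h.var_mul_coeffs i)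
  var_mul_var i j := by
    simp only [coeffs_op, span_singleton_op, ← Submodule.map_op_mul, ← Submodule.map_sup,
      linearSpan_op, ← mul_assoc]
    exact Submodule.map_mono (by simpa only [mul_assoc] using h.var_mul_var j i)
  closure_eq_top := by
    have hpreimage : unop ⁻¹' (Set.range ι ∪ Set.range x) =
        Set.range (RingHom.op ι) ∪ Set.range fun i => MulOpposite.op (x i) := by
      ext a
      simp [← unop_inj, MulOpposite.exists]
    rw [← hpreimage, ← Subring.op_closure, h.closure_eq_top, Subring.op_top]

end Opposite

namespace SkewPBWExtension

variable {R A : Type*} [Ring R] [Ring A] {n : ℕ} {x : Fin n → A} (E : SkewPBWExtension R A n x)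

theorem closure_eq_top : Subring.closure (Set.range E.ι ∪ Set.range x) = ⊤ := by
  refine eq_top_iff.2 fun a _ => ?_
  have coeff_mem (r : R) : E.ι r ∈ Subring.closure (Set.range E.ι ∪ Set.range x) :=
    Subring.subset_closure (Or.inl ⟨r, rfl⟩)
  have var_mem (i : Fin n) : x i ∈ Subring.closure (Set.range E.ι ∪ Set.range x) :=
    Subring.subset_closure (Or.inr ⟨i, rfl⟩)
  obtain ⟨c, hc, -⟩ := E.basis a
  rw [hc]
  refine sum_mem fun α _ => mul_mem (coeff_mem _) (list_prod_mem ?_)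
  simpa only [List.forall_mem_ofFn_iff] using fun i => pow_mem (var_mem i) (α i)

variable {E} (hE : E.IsBijective)
include hE

theorem IsBijective.var_mul_coeffs_le (i : Fin n) :
    (ℤ ∙ x i) * coeffs E.ι ≤ coeffs E.ι * (ℤ ∙ x i) ⊔ coeffs E.ι := by
  obtain ⟨σ, δ, hσ⟩ := hE.1 i
  intro a ha
  obtain ⟨_, ⟨r, rfl⟩, rfl⟩ := mem_span_singleton_mul.1 ha
  exact (hσ r).symm ▸ add_mem_sup
    (mul_mem_mul (coeff_mem_coeffs _ _) (mem_span_singleton_self _)) (coeff_mem_coeffs _ _)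

theorem IsBijective.coeffs_mul_var_le (i : Fin n) :
    coeffs E.ι * (ℤ ∙ x i) ≤ (ℤ ∙ x i) * coeffs E.ι ⊔ coeffs E.ι := by
  obtain ⟨σ, δ, hσ⟩ := hE.1 i
  intro a ha
  obtain ⟨_, ⟨r, rfl⟩, rfl⟩ := mem_mul_span_singleton.1 ha
  have hr : E.ι r * x i = x i * E.ι (σ.symm r) + E.ι (-δ (σ.symm r)) := by
    rw [hσ, σ.apply_symm_apply, map_neg, add_neg_cancel_right]
  exact hr.symm ▸ add_mem_sup
    (mul_mem_mul (mem_span_singleton_self _) (coeff_mem_coeffs _ _)) (coeff_mem_coeffs _ _)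

theorem IsBijective.exists_var_mul_var_eq {i j : Fin n} (hij : i < j) :
    ∃ c : Rˣ, ∃ l ∈ linearSpan E.ι x, x j * x i = E.ι c * (x i * x j) + l := by
  obtain ⟨c, r0, r', hc⟩ := hE.2 i j hij
  exact ⟨c, _, const_add_sum_mem_linearSpan E.ι x r0 r', by rw [hc, add_assoc]⟩

theorem IsBijective.var_mul_var_le (i j : Fin n) :
    (ℤ ∙ x j) * (ℤ ∙ x i) ≤
      coeffs E.ι * ((ℤ ∙ x i) * (ℤ ∙ x j)) * coeffs E.ι ⊔ linearSpan E.ι x := by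
  have hmem (r : R) {l : A} (hl : l ∈ linearSpan E.ι x) : E.ι r * (x i * x j) + l ∈
      coeffs E.ι * ((ℤ ∙ x i) * (ℤ ∙ x j)) * coeffs E.ι ⊔ linearSpan E.ι x :=
    add_mem_sup (le_mul_coeffs _ _ <| mul_mem_mul (coeff_mem_coeffs _ r) <|
      mul_mem_mul (mem_span_singleton_self _) (mem_span_singleton_self _)) hl
  rw [span_mul_span, Set.singleton_mul_singleton, span_singleton_le_iff_mem]
  rcases lt_trichotomy i j with hij | rfl | hji
  · obtain ⟨c, l, hl, hc⟩ := hE.exists_var_mul_var_eq hij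
    exact hc ▸ hmem c hl
  · simpa only [map_one, one_mul, add_zero] using hmem 1 (zero_mem _)
  · obtain ⟨c, l, hl, hc⟩ := hE.exists_var_mul_var_eq hji
    have hc' : x j * x i = E.ι ↑c⁻¹ * (x i * x j) + -(E.ι ↑c⁻¹ * l) := by
      rw [hc, mul_add, ← mul_assoc, ← map_mul, c.inv_mul, map_one, one_mul, add_neg_cancel_right]
    have hl' : E.ι ↑c⁻¹ * l ∈ linearSpan E.ι x :=
      coeffs_mul_linearSpan_le E.ι x (mul_mem_mul (coeff_mem_coeffs _ _) hl)
    exact hc' ▸ hmem _ (neg_mem hl')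

theorem IsBijective.isAlmostNormalizing : IsAlmostNormalizing E.ι x where
  var_mul_coeffs := hE.var_mul_coeffs_le
  coeffs_mul_var := hE.coeffs_mul_var_le
  var_mul_var := hE.var_mul_var_le
  closure_eq_top := E.closure_eq_top

end SkewPBWExtension

theorem skewPBWExtension_isNoetherianRing_general {R A X : Type*} [Ring R] [Ring A] [Finite X]
    {ι : R →+* A} {x : X → A} (h : IsAlmostNormalizing ι x) :
    (IsNoetherianRing R → IsNoetherianRing A) ∧
    (IsNoetherianRing Rᵐᵒᵖ → IsNoetherianRing Aᵐᵒᵖ) :=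
  ⟨fun _ => h.isNoetherianRing, fun _ => h.op.isNoetherianRing⟩

/-- (Hilbert Basis Theorem) If `A` is a bijective skew PBW extension of `R` and `R` is
left (respectively right) noetherian, then `A` is left (respectively right) noetherian.
(`IsNoetherianRing` is left noetherianity; right noetherianity is left noetherianity of the
opposite ring.) -/
theorem skewPBWExtension_isNoetherianRing {R A : Type*} [Ring R] [Ring A] {n : ℕ}
    {x : Fin n → A} (E : SkewPBWExtension R A n x) (hbij : E.IsBijective) :
    (IsNoetherianRing R → IsNoetherianRing A) ∧
    (IsNoetherianRing Rᵐᵒᵖ → IsNoetherianRing Aᵐᵒᵖ) :=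
  skewPBWExtension_isNoetherianRing_general hbij.isAlmostNormalizing
end

section
/- Let B be a left noetherian semi-graded ring. Then the collection sgr-B of finitely generated semi-graded left B-modules, with homogeneous B-module homomorphisms as morphisms, is an abelian category: it has kernels and cokernels (the kernel and image of a homogeneous homomorphism between objects of sgr-B are semi-graded finitely generated submodules and the quotient by the image is in sgr-B), it is normal and conormal, it is additive with finite coproducts given by direct sums with componentwise semi-graduation, and composition of morphisms is bilinear. -/
open scoped DirectSum
open CategoryTheory

/-- A ring `B` is *semi-graded (SG)*. -/
structure SemiGraded (B : Type) [Ring B] where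
  comp : ℕ → AddSubgroup B
  internal : DirectSum.IsInternal comp
  mul_mem : ∀ m n : ℕ, ∀ a ∈ comp m, ∀ b ∈ comp n, a * b ∈ ⨆ k ∈ Set.Iic (m + n), comp k
  one_mem' : 1 ∈ comp 0

variable (B : Type) [Ring B] (SG : SemiGraded B)

/-- An object of the category `sgr-B`: a finitely generated semi-graded left
`B`-module `M = ⊕_{n∈ℤ} M_n` with `B_m M_n ⊆ ⊕_{k ≤ m+n} M_k`. -/
structure SgrObj where
  carrier : Type
  [acg : AddCommGroup carrier]
  [mod : Module B carrier]
  comp : ℤ → AddSubgroup carrier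
  internal : DirectSum.IsInternal comp
  smul_mem : ∀ (m : ℕ) (n : ℤ), ∀ b ∈ SG.comp m, ∀ v ∈ comp n,
    b • v ∈ ⨆ k ∈ Set.Iic ((m : ℤ) + n), comp k
  fg : Module.Finite B carrier

attribute [instance] SgrObj.acg SgrObj.mod

/-- The category `sgr-B` of finitely generated semi-graded left `B`-modules, whose
morphisms are the homogeneous `B`-homomorphisms. -/
instance sgrCategory : Category (SgrObj B SG) where
  Hom M N := {f : M.carrier →ₗ[B] N.carrier // ∀ n : ℤ, ∀ x ∈ M.comp n, f x ∈ N.comp n}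
  id M := ⟨LinearMap.id, fun n x hx => hx⟩
  comp f g := ⟨g.1.comp f.1, fun n x hx => g.2 n _ (f.2 n x hx)⟩

/-!
A homogeneous homomorphism commutes with taking homogeneous components, so its kernel and its
range are homogeneous submodules, and a homogeneous submodule and the quotient by it inherit a
direct sum decomposition. The bound `B_m M_n ⊆ ⊕_{k ≤ m+n} M_k` passes to the submodule because an
element lies in `⊕_{k ∈ S} M_k` exactly when its components outside `S` vanish. Noetherianity makes
kernels finitely generated. Monomorphisms and epimorphisms are then the injective and surjective
homogeneous maps, and these are normal: the linear map induced by a homogeneous map through an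
injective or a surjective homogeneous map is again homogeneous.
-/

section InternalDirectSum

open DirectSum

variable {ι A A' : Type*} [AddCommGroup A] [AddCommGroup A']
  {ℳ : ι → AddSubgroup A} {𝒩 : ι → AddSubgroup A'}

theorem map_mem_biSup {F : Type*} [FunLike F A A'] [AddMonoidHomClass F A A'] {f : F}
    (hf : ∀ i, ∀ x ∈ ℳ i, f x ∈ 𝒩 i) {S : Set ι} {x : A} (hx : x ∈ ⨆ k ∈ S, ℳ k) :
    f x ∈ ⨆ k ∈ S, 𝒩 k := by
  have h_le : ⨆ k ∈ S, ℳ k ≤ (⨆ k ∈ S, 𝒩 k).comap (f : A →+ A') := iSup₂_le fun k hk y hy =>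
    AddSubgroup.mem_iSup_of_mem k (AddSubgroup.mem_iSup_of_mem hk (hf k y hy))
  exact h_le hx

theorem mem_biSup_prod_iff {S : Set ι} {x : A × A'} :
    x ∈ ⨆ k ∈ S, (ℳ k).prod (𝒩 k) ↔ x.1 ∈ ⨆ k ∈ S, ℳ k ∧ x.2 ∈ ⨆ k ∈ S, 𝒩 k := by
  constructor
  · intro hx
    exact ⟨map_mem_biSup (f := AddMonoidHom.fst A A') (fun _ _ => And.left) hx,
      map_mem_biSup (f := AddMonoidHom.snd A A') (fun _ _ => And.right) hx⟩
  · rintro ⟨hx₁, hx₂⟩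
    have h_inl := map_mem_biSup (f := AddMonoidHom.inl A A') (𝒩 := fun k => (ℳ k).prod (𝒩 k))
      (fun _ _ hy => ⟨hy, zero_mem _⟩) hx₁
    have h_inr := map_mem_biSup (f := AddMonoidHom.inr A A') (𝒩 := fun k => (ℳ k).prod (𝒩 k))
      (fun _ _ hy => ⟨zero_mem _, hy⟩) hx₂
    simpa using add_mem h_inl h_inr

variable [DecidableEq ι]

theorem isInternal_of_iSupIndep_of_iSup_eq_top (h_indep : iSupIndep ℳ) (h_top : ⨆ i, ℳ i = ⊤) :
    IsInternal ℳ := by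
  refine ⟨h_indep.dfinsuppSumAddHom_injective, ?_⟩
  rw [← AddMonoidHom.range_eq_top, eq_top_iff, ← h_top]
  exact iSup_le fun i x hx => ⟨of (fun i => ℳ i) i ⟨x, hx⟩, coeAddMonoidHom_of ℳ i _⟩

theorem isInternal_of_subsingleton [Subsingleton A] : IsInternal ℳ :=
  isInternal_of_iSupIndep_of_iSup_eq_top
    (fun _ => AddSubgroup.disjoint_def.2 fun _ _ => Subsingleton.elim _ _) (Subsingleton.elim _ _)

variable [Decomposition ℳ]

theorem mem_of_forall_decompose_mem {K : AddSubgroup A} {x : A}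
    (hx : ∀ i, (decompose ℳ x i : A) ∈ K) : x ∈ K := by
  classical
  rw [← sum_support_decompose ℳ x]
  exact sum_mem fun i _ => hx i

theorem mem_biSup_iff_decompose_eq_zero {S : Set ι} {x : A} :
    x ∈ ⨆ k ∈ S, ℳ k ↔ ∀ i ∉ S, decompose ℳ x i = 0 := by
  constructor
  · intro hx i hi
    let component : A →+ ℳ i :=
      (DFinsupp.evalAddMonoidHom i).comp (decomposeAddEquiv ℳ).toAddMonoidHom
    have h_le : ⨆ k ∈ S, ℳ k ≤ component.ker := iSup₂_le fun k hk y hy =>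
      Subtype.ext (decompose_of_mem_ne ℳ hy (ne_of_mem_of_not_mem hk hi))
    exact h_le hx
  · refine fun hx => mem_of_forall_decompose_mem (ℳ := ℳ) fun i => ?_
    by_cases hi : i ∈ S
    · exact AddSubgroup.mem_iSup_of_mem i (AddSubgroup.mem_iSup_of_mem hi (decompose ℳ x i).2)
    · rw [hx i hi]
      exact zero_mem _

variable (ℳ) in
theorem iSup_eq_top_of_decomposition : ⨆ i, ℳ i = ⊤ := by
  rw [← iSup_univ, eq_top_iff]
  exact fun x _ => mem_biSup_iff_decompose_eq_zero.2 fun i hi => absurd (Set.mem_univ i) hi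

theorem isInternal_prod [Decomposition 𝒩] : IsInternal fun i => (ℳ i).prod (𝒩 i) := by
  refine isInternal_of_iSupIndep_of_iSup_eq_top (fun i => ?_) ?_
  · have h_indep := (Decomposition.isInternal ℳ).addSubgroup_iSupIndep i
    have h_indep' := (Decomposition.isInternal 𝒩).addSubgroup_iSupIndep i
    rw [AddSubgroup.disjoint_def] at h_indep h_indep' ⊢
    intro x hx hx'
    obtain ⟨hx₁, hx₂⟩ := mem_biSup_prod_iff (S := {j | j ≠ i}).1 hx'
    exact Prod.ext (h_indep hx.1 hx₁) (h_indep' hx.2 hx₂)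
  · rw [← iSup_univ, eq_top_iff]
    intro x _
    rw [mem_biSup_prod_iff, iSup_univ, iSup_univ, iSup_eq_top_of_decomposition ℳ,
      iSup_eq_top_of_decomposition 𝒩]
    exact ⟨trivial, trivial⟩

section HomogeneousMap

variable [Decomposition 𝒩] {F : Type*} [FunLike F A A'] [AddMonoidHomClass F A A'] {f : F}
  (hf : ∀ i, ∀ x ∈ ℳ i, f x ∈ 𝒩 i)
include hf

theorem map_decompose (x : A) (i : ι) : f (decompose ℳ x i) = decompose 𝒩 (f x) i := by
  induction x using Decomposition.inductionOn ℳ with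
  | zero => simp
  | @homogeneous j x =>
    rcases eq_or_ne j i with rfl | hji
    · rw [decompose_of_mem_same ℳ x.2, decompose_of_mem_same 𝒩 (hf j x x.2)]
    · rw [decompose_of_mem_ne ℳ x.2 hji, decompose_of_mem_ne 𝒩 (hf j x x.2) hji, map_zero]
  | add x y hx hy => simp [hx, hy]

theorem mem_of_map_mem_of_injective (hinj : Function.Injective f) {i : ι} {x : A}
    (hx : f x ∈ 𝒩 i) : x ∈ ℳ i := by
  have h_component : (decompose ℳ x i : A) = x :=
    hinj ((map_decompose hf x i).trans (decompose_of_mem_same 𝒩 hx))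
  exact h_component ▸ (decompose ℳ x i).2

theorem exists_mem_map_eq_of_surjective (hsurj : Function.Surjective f) {i : ι} {y : A'}
    (hy : y ∈ 𝒩 i) : ∃ x ∈ ℳ i, f x = y := by
  obtain ⟨x, rfl⟩ := hsurj y
  exact ⟨decompose ℳ x i, (decompose ℳ x i).2,
    (map_decompose hf x i).trans (decompose_of_mem_same 𝒩 hy)⟩

end HomogeneousMap

section LinearMap

variable {R : Type*} [Ring R] [Module R A] [Module R A']

theorem mem_biSup_comap_iff {f : A' →ₗ[R] A} (hf : Function.Injective f)
    (hrange : f.range.IsHomogeneous ℳ) {S : Set ι} {x : A'} :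
    x ∈ ⨆ k ∈ S, (ℳ k).comap f.toAddMonoidHom ↔ f x ∈ ⨆ k ∈ S, ℳ k := by
  refine ⟨map_mem_biSup fun _ _ => id, fun hx => ?_⟩
  rw [mem_biSup_iff_decompose_eq_zero] at hx
  refine (AddSubgroup.mem_map_iff_mem (f := f.toAddMonoidHom) hf).1 ?_
  refine mem_of_forall_decompose_mem (ℳ := ℳ) fun i => ?_
  by_cases hi : i ∈ S
  · obtain ⟨y, hy⟩ := hrange i ⟨x, rfl⟩
    have hy_mem : f y ∈ ℳ i := hy ▸ (decompose ℳ (f x) i).2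
    exact ⟨y, AddSubgroup.mem_iSup_of_mem i (AddSubgroup.mem_iSup_of_mem hi hy_mem), hy⟩
  · exact (congrArg Subtype.val (hx i hi)).symm ▸ zero_mem _

theorem isInternal_comap_of_injective {f : A' →ₗ[R] A} (hf : Function.Injective f)
    (hrange : f.range.IsHomogeneous ℳ) : IsInternal fun i => (ℳ i).comap f.toAddMonoidHom := by
  refine isInternal_of_iSupIndep_of_iSup_eq_top (fun i => ?_) ?_
  · have h_indep := (Decomposition.isInternal ℳ).addSubgroup_iSupIndep i
    rw [AddSubgroup.disjoint_def] at h_indep ⊢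
    intro x hx hx'
    exact (map_eq_zero_iff f hf).1
      (h_indep hx ((mem_biSup_comap_iff hf hrange (S := {j | j ≠ i})).1 hx'))
  · rw [← iSup_univ, eq_top_iff]
    intro x _
    rw [mem_biSup_comap_iff hf hrange, iSup_univ, iSup_eq_top_of_decomposition ℳ]
    trivial

theorem isInternal_map_of_surjective {f : A →ₗ[R] A'} (hf : Function.Surjective f)
    (hker : f.ker.IsHomogeneous ℳ) : IsInternal fun i => (ℳ i).map f.toAddMonoidHom := by
  refine isInternal_of_iSupIndep_of_iSup_eq_top (fun i => ?_) ?_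
  · simp_rw [← AddSubgroup.map_iSup]
    rw [AddSubgroup.disjoint_def]
    rintro _ ⟨x, hx, rfl⟩ ⟨y, hy, (hyx : f y = f x)⟩
    have h_sub : x - y ∈ f.ker := by rw [LinearMap.mem_ker, map_sub, hyx, sub_self]
    have hy_zero : decompose ℳ y i = 0 :=
      mem_biSup_iff_decompose_eq_zero (S := {j | j ≠ i}).1 hy i (not_not.2 rfl)
    have h_component : (decompose ℳ (x - y) i : A) = x := by
      rw [decompose_sub, DirectSum.sub_apply, hy_zero, sub_zero, decompose_of_mem_same ℳ hx]
    exact h_component ▸ hker i h_sub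
  · rw [← AddSubgroup.map_iSup, iSup_eq_top_of_decomposition ℳ,
      AddSubgroup.map_top_of_surjective f.toAddMonoidHom hf]

theorem isHomogeneous_ker [Decomposition 𝒩] {f : A →ₗ[R] A'} (hf : ∀ i, ∀ x ∈ ℳ i, f x ∈ 𝒩 i) :
    f.ker.IsHomogeneous ℳ := by
  intro i x hx
  rw [LinearMap.mem_ker, map_decompose hf, LinearMap.mem_ker.1 hx, decompose_zero]
  rfl

theorem isHomogeneous_range [Decomposition 𝒩] {f : A →ₗ[R] A'}
    (hf : ∀ i, ∀ x ∈ ℳ i, f x ∈ 𝒩 i) : f.range.IsHomogeneous 𝒩 := by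
  rintro i _ ⟨x, rfl⟩
  exact ⟨decompose ℳ x i, map_decompose hf x i⟩

end LinearMap

end InternalDirectSum

namespace SgrObj

open Limits

variable {B SG}

instance : CoeSort (SgrObj B SG) Type := ⟨carrier⟩

instance (M : SgrObj B SG) : Module.Finite B M := M.fg

noncomputable instance (M : SgrObj B SG) : DirectSum.Decomposition M.comp :=
  M.internal.chooseDecomposition

section Hom

variable {M N P : SgrObj B SG}

/-- The `B`-linear map underlying a morphism of `sgr-B`. -/
def toLinearMap (f : M ⟶ N) : M →ₗ[B] N := f.1

theorem toLinearMap_mem (f : M ⟶ N) (n : ℤ) (x : M) (hx : x ∈ M.comp n) :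
    toLinearMap f x ∈ N.comp n := f.2 n x hx

/-- A homogeneous `B`-linear map as a morphism of `sgr-B`. -/
def ofLinearMap (f : M →ₗ[B] N) (hf : ∀ n, ∀ x ∈ M.comp n, f x ∈ N.comp n) : M ⟶ N := ⟨f, hf⟩

theorem hom_ext {f g : M ⟶ N} (h : ∀ x, toLinearMap f x = toLinearMap g x) : f = g :=
  Subtype.ext (LinearMap.ext h)

variable (M N) in
/-- The additive group of homogeneous `B`-linear maps. -/
def homogeneousHom : AddSubgroup (M →ₗ[B] N) where
  carrier := {f | ∀ n, ∀ x ∈ M.comp n, f x ∈ N.comp n}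
  zero_mem' _ _ _ := zero_mem _
  add_mem' hf hg n x hx := add_mem (hf n x hx) (hg n x hx)
  neg_mem' hf n x hx := neg_mem (hf n x hx)

instance : Preadditive (SgrObj B SG) where
  homGroup M N := inferInstanceAs (AddCommGroup (homogeneousHom M N))
  add_comp _ _ _ f f' g := hom_ext fun x =>
    map_add (toLinearMap g) (toLinearMap f x) (toLinearMap f' x)
  comp_add _ _ _ _ _ _ := rfl

theorem comp_eq_zero_iff {f : M ⟶ N} {g : N ⟶ P} :
    f ≫ g = 0 ↔ ∀ x, toLinearMap g (toLinearMap f x) = 0 :=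
  ⟨fun w => LinearMap.congr_fun (congrArg toLinearMap w), fun h => hom_ext h⟩

theorem mono_of_injective {f : M ⟶ N} (hf : Function.Injective (toLinearMap f)) : Mono f :=
  Preadditive.mono_of_cancel_zero f fun _ w =>
    hom_ext fun x => hf ((comp_eq_zero_iff.1 w x).trans (map_zero _).symm)

theorem epi_of_surjective {f : M ⟶ N} (hf : Function.Surjective (toLinearMap f)) : Epi f :=
  Preadditive.epi_of_cancel_zero f fun _ w => hom_ext <| hf.forall.2 <| comp_eq_zero_iff.1 w

end Hom

/-- A homogeneous submodule of a semi-graded module, as an object of `sgr-B`. It is finitely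
generated because `B` is left noetherian. -/
def ofSubmodule [IsNoetherianRing B] (M : SgrObj B SG) (K : Submodule B M)
    (hK : K.IsHomogeneous M.comp) : SgrObj B SG :=
  have hrange : K.subtype.range.IsHomogeneous M.comp := by rwa [K.range_subtype]
  { carrier := K
    comp n := (M.comp n).comap K.subtype.toAddMonoidHom
    internal := isInternal_comap_of_injective K.subtype_injective hrange
    smul_mem m n b hb v hv :=
      (mem_biSup_comap_iff K.subtype_injective hrange).2 (M.smul_mem m n b hb v hv)
    fg := inferInstance }

/-- The quotient of a semi-graded module by a homogeneous submodule, as an object of `sgr-B`. -/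
def quotient (M : SgrObj B SG) (K : Submodule B M) (hK : K.IsHomogeneous M.comp) :
    SgrObj B SG where
  carrier := M ⧸ K
  comp n := (M.comp n).map K.mkQ.toAddMonoidHom
  internal := isInternal_map_of_surjective K.mkQ_surjective (by rwa [K.ker_mkQ])
  smul_mem := by
    rintro m n b hb _ ⟨v, hv, rfl⟩
    exact map_mem_biSup (f := K.mkQ)
      (fun _ _ => AddSubgroup.mem_map_of_mem _) (M.smul_mem m n b hb v hv)
  fg := inferInstance

/-- The direct sum of two semi-graded modules, with the componentwise semi-graduation. -/
def prod (M N : SgrObj B SG) : SgrObj B SG where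
  carrier := M × N
  comp n := (M.comp n).prod (N.comp n)
  internal := isInternal_prod
  smul_mem m n b hb _ hv :=
    mem_biSup_prod_iff.2 ⟨M.smul_mem m n b hb _ hv.1, N.smul_mem m n b hb _ hv.2⟩
  fg := inferInstance

variable (B SG) in
/-- The zero module, as an object of `sgr-B`. -/
def zero : SgrObj B SG where
  carrier := PUnit
  comp _ := ⊥
  internal := isInternal_of_subsingleton
  smul_mem _ _ _ _ _ _ := zero_mem _
  fg := inferInstance

instance : HasZeroObject (SgrObj B SG) :=
  ⟨zero B SG, (IsZero.iff_id_eq_zero _).2 (hom_ext fun _ => rfl)⟩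

/-- The direct sum as a binary bicone. -/
def prodBicone (M N : SgrObj B SG) : BinaryBicone M N where
  pt := M.prod N
  fst := ofLinearMap (LinearMap.fst B M N) fun _ _ hx => hx.1
  snd := ofLinearMap (LinearMap.snd B M N) fun _ _ hx => hx.2
  inl := ofLinearMap (LinearMap.inl B M N) fun _ _ hx => ⟨hx, zero_mem _⟩
  inr := ofLinearMap (LinearMap.inr B M N) fun _ _ hx => ⟨zero_mem _, hx⟩
  inl_fst := rfl
  inl_snd := rfl
  inr_fst := rfl
  inr_snd := rfl

instance : HasBinaryBiproducts (SgrObj B SG) where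
  has_binary_biproduct M N := hasBinaryBiproduct_of_total (prodBicone M N) <| hom_ext fun x =>
    Prod.ext (add_zero x.1) (zero_add x.2)

instance : HasFiniteProducts (SgrObj B SG) :=
  hasFiniteProducts_of_has_binary_and_terminal

section Exact

variable {M N P : SgrObj B SG} {f : M ⟶ N} {g : N ⟶ P}

theorem comp_eq_zero_of_exact (hfg : Function.Exact (toLinearMap f) (toLinearMap g)) :
    f ≫ g = 0 :=
  comp_eq_zero_iff.2 hfg.apply_apply_eq_zero

/-- In an exact sequence `0 ⟶ M ⟶ N ⟶ P` of semi-graded modules, `M ⟶ N` is a kernel of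
`N ⟶ P`. -/
noncomputable def isLimitKernelForkOfExact (hf : Function.Injective (toLinearMap f))
    (hfg : Function.Exact (toLinearMap f) (toLinearMap g)) :
    IsLimit (KernelFork.ofι f (comp_eq_zero_of_exact hfg)) :=
  have := mono_of_injective hf
  KernelFork.IsLimit.ofι' f _ fun {Q} k w =>
    have mem_range (x : Q) : toLinearMap k x ∈ (toLinearMap f).range :=
      (hfg _).1 (comp_eq_zero_iff.1 w x)
    let l : Q →ₗ[B] M := (LinearEquiv.ofInjective _ hf).symm.toLinearMap.comp
      ((toLinearMap k).codRestrict _ mem_range)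
    have fac (x : Q) : toLinearMap f (l x) = toLinearMap k x :=
      LinearEquiv.ofInjective_symm_apply _ (h := hf) ⟨toLinearMap k x, mem_range x⟩
    ⟨ofLinearMap l fun n x hx =>
      mem_of_map_mem_of_injective (toLinearMap_mem f) hf ((fac x).symm ▸ toLinearMap_mem k n x hx),
      hom_ext fac⟩

/-- In an exact sequence `M ⟶ N ⟶ P ⟶ 0` of semi-graded modules, `N ⟶ P` is a cokernel of
`M ⟶ N`. -/
noncomputable def isColimitCokernelCoforkOfExact (hg : Function.Surjective (toLinearMap g))
    (hfg : Function.Exact (toLinearMap f) (toLinearMap g)) :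
    IsColimit (CokernelCofork.ofπ g (comp_eq_zero_of_exact hfg)) :=
  have := epi_of_surjective hg
  CokernelCofork.IsColimit.ofπ' g _ fun {Q} k w =>
    have range_le_ker : (toLinearMap f).range ≤ (toLinearMap k).ker :=
      LinearMap.range_le_ker_iff.2 (LinearMap.ext (comp_eq_zero_iff.1 w))
    let l : P →ₗ[B] Q := (Submodule.liftQ _ (toLinearMap k) range_le_ker).comp
      (hfg.linearEquivOfSurjective hg).symm.toLinearMap
    have fac (x : N) : l (toLinearMap g x) = toLinearMap k x :=
      congrArg (Submodule.liftQ _ (toLinearMap k) range_le_ker)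
        (hfg.linearEquivOfSurjective_symm_apply hg x)
    ⟨ofLinearMap l fun n y hy => by
      obtain ⟨x, hx, rfl⟩ := exists_mem_map_eq_of_surjective (toLinearMap_mem g) hg hy
      exact (fac x).symm ▸ toLinearMap_mem k n x hx,
      hom_ext fac⟩

end Exact

section KernelsCokernels

variable {M N : SgrObj B SG} (f : M ⟶ N)

theorem isHomogeneous_ker_toLinearMap : (toLinearMap f).ker.IsHomogeneous M.comp :=
  isHomogeneous_ker (toLinearMap_mem f)

theorem isHomogeneous_range_toLinearMap : (toLinearMap f).range.IsHomogeneous N.comp :=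
  isHomogeneous_range (toLinearMap_mem f)

/-- The inclusion of the kernel of a homogeneous homomorphism. -/
def kernelι [IsNoetherianRing B] : M.ofSubmodule _ (isHomogeneous_ker_toLinearMap f) ⟶ M :=
  ofLinearMap (toLinearMap f).ker.subtype fun _ _ => id

theorem exact_kernelι [IsNoetherianRing B] :
    Function.Exact (toLinearMap (kernelι f)) (toLinearMap f) :=
  LinearMap.exact_subtype_ker_map _

theorem injective_kernelι [IsNoetherianRing B] : Function.Injective (toLinearMap (kernelι f)) :=
  Subtype.val_injective

/-- The projection onto the quotient by the image of a homogeneous homomorphism. -/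
def cokernelπ : N ⟶ N.quotient _ (isHomogeneous_range_toLinearMap f) :=
  ofLinearMap (toLinearMap f).range.mkQ fun _ _ => AddSubgroup.mem_map_of_mem _

theorem exact_cokernelπ : Function.Exact (toLinearMap f) (toLinearMap (cokernelπ f)) :=
  LinearMap.exact_map_mkQ_range _

theorem surjective_cokernelπ : Function.Surjective (toLinearMap (cokernelπ f)) :=
  Submodule.mkQ_surjective _

theorem injective_of_mono [IsNoetherianRing B] [Mono f] :
    Function.Injective (toLinearMap f) := by
  have h_zero : kernelι f = 0 := zero_of_comp_mono f (comp_eq_zero_of_exact (exact_kernelι f))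
  refine (injective_iff_map_eq_zero _).2 fun x hx => ?_
  exact LinearMap.congr_fun (congrArg toLinearMap h_zero) ⟨x, hx⟩

theorem surjective_of_epi [Epi f] : Function.Surjective (toLinearMap f) := by
  have h_zero : cokernelπ f = 0 := zero_of_epi_comp f (comp_eq_zero_of_exact (exact_cokernelπ f))
  exact fun y => (exact_cokernelπ f y).1 (LinearMap.congr_fun (congrArg toLinearMap h_zero) y)

end KernelsCokernels

instance [IsNoetherianRing B] : HasKernels (SgrObj B SG) where
  has_limit f := ⟨⟨_, isLimitKernelForkOfExact (injective_kernelι f) (exact_kernelι f)⟩⟩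

instance : HasCokernels (SgrObj B SG) where
  has_colimit f :=
    ⟨⟨_, isColimitCokernelCoforkOfExact (surjective_cokernelπ f) (exact_cokernelπ f)⟩⟩

instance [IsNoetherianRing B] : IsNormalMonoCategory (SgrObj B SG) where
  normalMonoOfMono f _ :=
    ⟨⟨_, cokernelπ f, _, isLimitKernelForkOfExact (injective_of_mono f) (exact_cokernelπ f)⟩⟩

instance [IsNoetherianRing B] : IsNormalEpiCategory (SgrObj B SG) where
  normalEpiOfEpi f _ :=
    ⟨⟨_, kernelι f, _, isColimitCokernelCoforkOfExact (surjective_of_epi f) (exact_kernelι f)⟩⟩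

end SgrObj

/-- If `B` is a left noetherian semi-graded ring, then the category `sgr-B` of finitely
generated semi-graded left `B`-modules with homogeneous `B`-homomorphisms is an abelian
category (in particular it has kernels and cokernels, is normal and conormal, is
additive, and composition is bilinear). -/
theorem sgr_abelian (hB : IsNoetherianRing B) :
    Nonempty (Abelian (SgrObj B SG)) :=
  ⟨{ has_finite_products := inferInstance
     has_kernels := inferInstance
     has_cokernels := inferInstance
     normalMonoOfMono := IsNormalMonoCategory.normalMonoOfMono
     normalEpiOfEpi := IsNormalEpiCategory.normalEpiOfEpi }⟩
end
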